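/- Boundary points are not hit by finite-energy radial Loewner flow (n = 1). Let τ ∈ (0,∞), let θ : [0,τ) → ℝ be locally absolutely continuous, and let ω : [0,τ) → (0,2π) be locally absolutely continuous satisfying ω'_s = cot(ω_s/2) − θ'_s for almost every s ∈ [0,τ). If liminf_{t→τ⁻} min(ω_t, 2π − ω_t) = 0, then ∫₀^τ (θ'_s)² ds = ∞, i.e., the Dirichlet energy E_τ(θ) is infinite. -/

import Mathlib

open MeasureTheory Filter Set
open scoped Real Topology ENNReal Classical

noncomputable section

/-- Absolute continuity of a scalar function on `[0,b]`: it is the integral of a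
(locally) integrable function. -/
def AbsCont1 (b : ℝ) (f : ℝ → ℝ) : Prop :=
  ∃ v : ℝ → ℝ, IntegrableOn v (Icc 0 b) ∧
    ∀ t ∈ Icc (0 : ℝ) b, f t = f 0 + ∫ s in (0 : ℝ)..t, v s

/-!
The drift is a gradient: `cot (x / 2) = V' x` with `V x = 2 log (sin (x / 2))`. Along the flow
`θ' = V'(ω) - ω'`, hence `(θ')² = (V'(ω) + ω')² - 4 V'(ω) ω' ≥ -4 (V ∘ ω)'`, so that moving from
`ω 0` to `ω t` costs `∫ (θ')²` at least `4 (V (ω 0) - V (ω t))`. Since `V` tends to `-∞` at `0` and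
`2π`, accumulating there costs an infinite amount.
-/

section AbsoluteContinuity

variable {a b : ℝ}

theorem absolutelyContinuousOnInterval_of_dist_le {X Y : Type*} [PseudoMetricSpace X]
    [PseudoMetricSpace Y] {f : ℝ → X} {g : ℝ → Y} (K : ℝ)
    (hg : AbsolutelyContinuousOnInterval g a b)
    (hfg : ∀ x ∈ uIcc a b, ∀ y ∈ uIcc a b, dist (f x) (f y) ≤ K * dist (g x) (g y)) :
    AbsolutelyContinuousOnInterval f a b := by
  unfold AbsolutelyContinuousOnInterval at hg
  refine squeeze_zero' (Eventually.of_forall fun _ ↦ Finset.sum_nonneg fun _ _ ↦ dist_nonneg) ?_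
    (by simpa only [mul_zero] using hg.const_mul K)
  rw [eventually_inf_principal]
  refine Eventually.of_forall fun E hE ↦ ?_
  rw [Finset.mul_sum]
  exact Finset.sum_le_sum fun i hi ↦ hfg _ (hE.1 i hi).1 _ (hE.1 i hi).2

theorem absolutelyContinuousOnInterval_comp_of_locallyLipschitzOn {X Y : Type*}
    [SeminormedAddCommGroup X] [PseudoMetricSpace Y] {F : X → Y} {s : Set X} {g : ℝ → X}
    (hF : LocallyLipschitzOn s F) (hg : AbsolutelyContinuousOnInterval g a b)
    (hgs : MapsTo g (uIcc a b) s) :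
    AbsolutelyContinuousOnInterval (F ∘ g) a b := by
  obtain ⟨K, hK⟩ := (hF.mono hgs.image_subset).exists_lipschitzOnWith_of_compact
    (isCompact_uIcc.image_of_continuousOn hg.continuousOn)
  exact absolutelyContinuousOnInterval_of_dist_le K hg fun x hx y hy ↦
    hK.dist_le_mul _ (mem_image_of_mem g hx) _ (mem_image_of_mem g hy)

theorem AbsCont1.absolutelyContinuousOnInterval {f : ℝ → ℝ} (hf : AbsCont1 b f) (hb : 0 ≤ b) :
    AbsolutelyContinuousOnInterval f 0 b := by
  obtain ⟨v, hv, hfv⟩ := hf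
  have hv' : IntervalIntegrable v volume 0 b :=
    (intervalIntegrable_iff_integrableOn_Icc_of_le hb).2 hv
  refine absolutelyContinuousOnInterval_of_dist_le 1
    (hv'.absolutelyContinuousOnInterval_intervalIntegral left_mem_uIcc) fun x hx y hy ↦ ?_
  rw [uIcc_of_le hb] at hx hy
  rw [hfv x hx, hfv y hy, dist_add_left, one_mul]

end AbsoluteContinuity

theorem ofReal_integral_le_lintegral_ofReal {α : Type*} [MeasurableSpace α] (μ : Measure α)
    (f : α → ℝ) : ENNReal.ofReal (∫ x, f x ∂μ) ≤ ∫⁻ x, ENNReal.ofReal (f x) ∂μ := by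
  by_cases hf : Integrable f μ
  · rw [integral_eq_lintegral_pos_part_sub_lintegral_neg_part hf]
    exact (ENNReal.ofReal_le_ofReal (sub_le_self _ ENNReal.toReal_nonneg)).trans
      ENNReal.ofReal_toReal_le
  · simp [integral_undef hf]

section GradientDrift

variable {a b τ : ℝ} {s : Set ℝ} {V V' ω : ℝ → ℝ}

theorem ofReal_four_mul_sub_le_lintegral_sq (hab : a ≤ b) (hV : LocallyLipschitzOn s V)
    (hV' : ∀ x ∈ s, HasDerivAt V (V' x) x) (hω : AbsolutelyContinuousOnInterval ω a b)
    (hωs : MapsTo ω (Icc a b) s) :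
    ENNReal.ofReal (4 * (V (ω a) - V (ω b))) ≤
      ∫⁻ t in Ioc a b, ENNReal.ofReal ((V' (ω t) - deriv ω t) ^ 2) := by
  rw [← uIcc_of_le hab] at hωs
  have hVω : AbsolutelyContinuousOnInterval (V ∘ ω) a b :=
    absolutelyContinuousOnInterval_comp_of_locallyLipschitzOn hV hω hωs
  have hftc : ∫ t in Ioc a b, -4 * deriv (V ∘ ω) t = 4 * (V (ω a) - V (ω b)) := by
    rw [integral_const_mul, ← intervalIntegral.integral_of_le hab, hVω.integral_deriv_eq_sub]
    simp only [Function.comp_apply]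
    ring
  rw [← hftc]
  refine (ofReal_integral_le_lintegral_ofReal _ _).trans (lintegral_mono_ae ?_)
  rw [ae_restrict_iff' measurableSet_Ioc]
  filter_upwards [hω.ae_differentiableAt] with t hdiff ht
  have ht' : t ∈ uIcc a b := uIoc_subset_uIcc (by rwa [uIoc_of_le hab])
  have hchain : deriv (V ∘ ω) t = V' (ω t) * deriv ω t :=
    ((hV' _ (hωs ht')).comp t (hdiff ht').hasDerivAt).deriv
  rw [hchain]
  exact ENNReal.ofReal_le_ofReal (by linarith [sq_nonneg (V' (ω t) + deriv ω t)])

theorem lintegral_sq_eq_top_of_not_bddBelow (hV : LocallyLipschitzOn s V)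
    (hV' : ∀ x ∈ s, HasDerivAt V (V' x) x)
    (hω : ∀ b ∈ Ico a τ, AbsolutelyContinuousOnInterval ω a b) (hωs : MapsTo ω (Ico a τ) s)
    (hunbdd : ¬ BddBelow ((V ∘ ω) '' Ico a τ)) :
    ∫⁻ t in Ico a τ, ENNReal.ofReal ((V' (ω t) - deriv ω t) ^ 2) = ⊤ := by
  by_contra hfin
  set E := ∫⁻ t in Ico a τ, ENNReal.ofReal ((V' (ω t) - deriv ω t) ^ 2)
  refine hunbdd ⟨V (ω a) - E.toReal / 4, forall_mem_image.2 fun b hb ↦ ?_⟩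
  have hsub : Icc a b ⊆ Ico a τ := Icc_subset_Ico_right hb.2
  have hcost : ENNReal.ofReal (4 * (V (ω a) - V (ω b))) ≤ E :=
    (ofReal_four_mul_sub_le_lintegral_sq hb.1 hV hV' (hω b hb) (hωs.mono_left hsub)).trans
      (lintegral_mono_set (Ioc_subset_Icc_self.trans hsub))
  rw [ENNReal.ofReal_le_iff_le_toReal hfin] at hcost
  simp only [Function.comp_apply]
  linarith

end GradientDrift

/-- The potential of the drift `cot (x / 2)` of the radial Loewner flow on `(0, 2π)`, tending to
`-∞` at both endpoints. It is meaningful only where `sin (x / 2) > 0`: elsewhere `Real.log` takes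
junk values. -/
def cotPotential (x : ℝ) : ℝ :=
  2 * Real.log (Real.sin (x / 2))

theorem sin_half_pos {x : ℝ} (hx : x ∈ Ioo 0 (2 * π)) : 0 < Real.sin (x / 2) :=
  Real.sin_pos_of_pos_of_lt_pi (by linarith [hx.1]) (by linarith [hx.2])

theorem hasDerivAt_cotPotential {x : ℝ} (hx : Real.sin (x / 2) ≠ 0) :
    HasDerivAt cotPotential (Real.cot (x / 2)) x := by
  refine ((((hasDerivAt_id' x).div_const 2).sin.log hx).const_mul 2).congr_deriv ?_
  rw [Real.cot_eq_cos_div_sin]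
  ring

theorem locallyLipschitzOn_cotPotential : LocallyLipschitzOn (Ioo 0 (2 * π)) cotPotential :=
  ContDiffOn.locallyLipschitzOn (convex_Ioo _ _) <|
    contDiffOn_const.mul <| ContDiffOn.log (by fun_prop) fun _ hx ↦ (sin_half_pos hx).ne'

theorem two_mul_exp_half_cotPotential_le {x : ℝ} (hx : x ∈ Ioo 0 (2 * π)) :
    2 * Real.exp (cotPotential x / 2) ≤ min x (2 * π - x) := by
  have hexp : Real.exp (cotPotential x / 2) = Real.sin (x / 2) := by
    rw [cotPotential, mul_div_cancel_left₀ _ two_ne_zero, Real.exp_log (sin_half_pos hx)]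
  have hleft : Real.sin (x / 2) ≤ x / 2 := Real.sin_le (by linarith [hx.1])
  have hright : Real.sin (x / 2) ≤ π - x / 2 := by
    rw [← Real.sin_pi_sub]
    exact Real.sin_le (by linarith [hx.2])
  rw [hexp]
  exact le_min (by linarith) (by linarith)

theorem not_bddBelow_cotPotential_of_liminf_eq_zero {a τ : ℝ} (haτ : a < τ) {ω : ℝ → ℝ}
    (hω : MapsTo ω (Ico a τ) (Ioo 0 (2 * π)))
    (hhit : liminf (fun t ↦ min (ω t) (2 * π - ω t)) (𝓝[<] τ) = 0) :
    ¬ BddBelow ((cotPotential ∘ ω) '' Ico a τ) := by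
  rintro ⟨m, hm⟩
  have hmem : ∀ᶠ t in 𝓝[<] τ, t ∈ Ico a τ := Ico_mem_nhdsLT haτ
  have hbdd : IsBoundedUnder (· ≤ ·) (𝓝[<] τ) (fun t ↦ min (ω t) (2 * π - ω t)) :=
    isBoundedUnder_of_eventually_le (hmem.mono fun t ht ↦ (min_le_left _ _).trans (hω ht).2.le)
  have hclose : ∃ᶠ t in 𝓝[<] τ, min (ω t) (2 * π - ω t) < 2 * Real.exp (m / 2) :=
    frequently_lt_of_liminf_lt hbdd.isCoboundedUnder_ge (by rw [hhit]; positivity)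
  obtain ⟨t, ht, htτ⟩ := (hclose.and_eventually hmem).exists
  have hlower : 2 * Real.exp (m / 2) ≤ 2 * Real.exp (cotPotential (ω t) / 2) := by
    gcongr
    exact hm (mem_image_of_mem _ htτ)
  exact (hlower.trans (two_mul_exp_half_cotPotential_le (hω htτ))).not_gt ht

theorem boundary_point_not_hit_of_finite_energy_general {τ : ℝ} (hτ : 0 < τ) {u ω : ℝ → ℝ}
    (hωac : ∀ b : ℝ, 0 ≤ b → b < τ → AbsCont1 b ω)
    (hω : ∀ t ∈ Ico (0 : ℝ) τ, ω t ∈ Ioo (0 : ℝ) (2 * π))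
    (hode : ∀ᵐ s ∂(volume.restrict (Ico (0 : ℝ) τ)),
      deriv ω s = Real.cot (ω s / 2) - u s)
    (hhit : liminf (fun t ↦ min (ω t) (2 * π - ω t)) (𝓝[<] τ) = 0) :
    ∫⁻ s in Ico (0 : ℝ) τ, ENNReal.ofReal (u s ^ 2) = ⊤ := by
  have hu : ∀ᵐ s ∂(volume.restrict (Ico (0 : ℝ) τ)),
      ENNReal.ofReal (u s ^ 2) = ENNReal.ofReal ((Real.cot (ω s / 2) - deriv ω s) ^ 2) :=
    hode.mono fun s hs ↦ by rw [hs, sub_sub_cancel]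
  rw [lintegral_congr_ae hu]
  exact lintegral_sq_eq_top_of_not_bddBelow (V' := fun x ↦ Real.cot (x / 2))
    locallyLipschitzOn_cotPotential (fun x hx ↦ hasDerivAt_cotPotential (sin_half_pos hx).ne')
    (fun b hb ↦ (hωac b hb.1 hb.2).absolutelyContinuousOnInterval hb.1) hω
    (not_bddBelow_cotPotential_of_liminf_eq_zero hτ hω hhit)

/-- Boundary points are not hit by the finite-energy radial Loewner
flow (`n = 1`): if `ω : [0,τ) → (0,2π)` solves `ω' = cot(ω/2) - θ'` and `ω` accumulates
at `{0, 2π}` as `t → τ⁻`, then the driver `θ` has infinite Dirichlet energy on `[0,τ)`. -/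
theorem boundary_point_not_hit_of_finite_energy
    (τ : ℝ) (hτ : 0 < τ)
    (θ ω : ℝ → ℝ)
    (hθac : ∀ b : ℝ, 0 ≤ b → b < τ → AbsCont1 b θ)
    (hωac : ∀ b : ℝ, 0 ≤ b → b < τ → AbsCont1 b ω)
    (hω : ∀ t ∈ Ico (0 : ℝ) τ, ω t ∈ Ioo (0 : ℝ) (2 * π))
    (hode : ∀ᵐ s ∂(volume.restrict (Ico (0 : ℝ) τ)),
      deriv ω s = Real.cot (ω s / 2) - deriv θ s)
    (hhit : Filter.liminf (fun t => min (ω t) (2 * π - ω t)) (𝓝[<] τ) = 0) :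
    ∫⁻ s in Ico (0 : ℝ) τ, ENNReal.ofReal (deriv θ s ^ 2) = ⊤ :=
  boundary_point_not_hit_of_finite_energy_general hτ hωac hω hode hhit

end
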